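/- Let a Dirac system y_x = i(z j + j V(x)) y on [0, ∞) be given, where j = diag(I_{m₁}, −I_{m₂}), V = [[0, v],[v*, 0]] and v is an m₁×m₂ locally integrable matrix function. Then there exists exactly one Weyl function of this system, i.e., exactly one m₂×m₁ matrix function φ, holomorphic on the open upper half-plane ℂ₊, satisfying ∫₀^∞ [I_{m₁} φ(z)*] u(x,z)* u(x,z) [I_{m₁}; φ(z)] dx < ∞ for every z ∈ ℂ₊, where u(x,z) is the fundamental solution of the system normalized by u(0,z) = I_m, m = m₁ + m₂. -/

import Mathlib

open Matrix MeasureTheory Set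

/-- `j = diag(I_{m₁}, −I_{m₂})`. -/
noncomputable def jMat (m₁ m₂ : ℕ) : Matrix (Fin m₁ ⊕ Fin m₂) (Fin m₁ ⊕ Fin m₂) ℂ :=
  Matrix.fromBlocks 1 0 0 (-1)

/-- `V = [[0, v],[v*, 0]]` built out of the potential `v`. -/
noncomputable def VMat {m₁ m₂ : ℕ} (v : ℝ → Matrix (Fin m₁) (Fin m₂) ℂ) (x : ℝ) :
    Matrix (Fin m₁ ⊕ Fin m₂) (Fin m₁ ⊕ Fin m₂) ℂ :=
  Matrix.fromBlocks 0 (v x) (v x)ᴴ 0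

/-- `φ` is a Weyl function of the Dirac system with normalized fundamental solution `u`:
`φ` is holomorphic on `ℂ₊` and
`∫₀^∞ [I φ(z)*] u(x,z)* u(x,z) [I; φ(z)] dx < ∞` for every `z ∈ ℂ₊`
(finiteness of the integral of the positive semidefinite matrix integrand is expressed as
entrywise integrability on `[0,∞)`). -/
def IsWeylFunction {m₁ m₂ : ℕ}
    (u : ℝ → ℂ → Matrix (Fin m₁ ⊕ Fin m₂) (Fin m₁ ⊕ Fin m₂) ℂ)
    (φ : ℂ → Matrix (Fin m₂) (Fin m₁) ℂ) : Prop :=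
  (∀ i j, DifferentiableOn ℂ (fun z => φ z i j) {z : ℂ | 0 < z.im}) ∧
  (∀ z : ℂ, 0 < z.im → ∀ i j, IntegrableOn
    (fun x : ℝ =>
      ((Matrix.fromRows (1 : Matrix (Fin m₁) (Fin m₁) ℂ) (φ z))ᴴ * (u x z)ᴴ * u x z *
        Matrix.fromRows (1 : Matrix (Fin m₁) (Fin m₁) ℂ) (φ z)) i j)
    (Ici 0))

/-!
For a solution `y` of the system, `d/dx (y* j y) = -2 Im z ‖y‖²`. When `Im z > 0` the matrix Weyl
discs `{φ | [I φ*] u(x,z)* j u(x,z) [I; φ] ≥ 0}` therefore shrink as `x` grows, and every member of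
the disc at `l` satisfies `∫₀ˡ ‖u [I; φ] ξ‖² ≤ ‖ξ‖² / (2 Im z)`. A solution starting at `(0, w)`
never drops below norm `‖w‖`; applied to the difference of two members of a disc, this bounds the
diameter of the disc at `l` by `√(2 / (l Im z))`, and over `[0, ∞)` it gives uniqueness.

The points `-u₂₂(l,z)⁻¹ u₂₁(l,z)` of the discs are holomorphic in `z` and converge locally uniformly
as `l → ∞`; their limit lies in all discs, hence is a Weyl function. That `u(l, ·)` is holomorphic
follows from a first order expansion of `u(x,z₀)⁻¹ u(x,z) = j u(x,z̄₀)* j u(x,z)` at `z₀`: this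
product solves a linear equation whose coefficient is `z - z₀` times a function continuous in `x`.
-/

open Filter Topology WithLp

section MatrixEntries

variable {ι κ 𝕜 E : Type*} [Finite κ] [NontriviallyNormedField 𝕜] [NormedAddCommGroup E]
  [NormedSpace 𝕜 E]

lemma hasDerivWithinAt_matrix_iff {f : 𝕜 → Matrix ι κ E} {f' : Matrix ι κ E} {s : Set 𝕜} {x : 𝕜} :
    HasDerivWithinAt f f' s x ↔ ∀ i k, HasDerivWithinAt (fun t => f t i k) (f' i k) s x := by
  have := Fintype.ofFinite κ
  exact hasDerivWithinAt_pi.trans (forall_congr' fun _ => hasDerivWithinAt_pi)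

lemma differentiableOn_matrix_iff {f : 𝕜 → Matrix ι κ E} {s : Set 𝕜} :
    DifferentiableOn 𝕜 f s ↔ ∀ i k, DifferentiableOn 𝕜 (fun z => f z i k) s := by
  have := Fintype.ofFinite κ
  exact differentiableOn_pi.trans (forall_congr' fun _ => differentiableOn_pi)

end MatrixEntries

open scoped Matrix.Norms.L2Operator

section Perturbation

variable {R : Type*} [NormedRing R] [NormedAlgebra ℂ R] {B W : ℝ → R} {ε : ℂ} {b l : ℝ}

lemma norm_le_exp_of_hasDerivWithinAt_smul_mul (hW0 : W 0 = 1)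
    (hW : ∀ x ∈ Ici (0 : ℝ), HasDerivWithinAt W (ε • (B x * W x)) (Ici 0) x)
    (hB : ∀ x ∈ Icc 0 l, ‖B x‖ ≤ b) {x : ℝ} (hx : x ∈ Icc 0 l) :
    ‖W x‖ ≤ ‖(1 : R)‖ * Real.exp (‖ε‖ * b * x) := by
  have gronwall : ‖W x‖ ≤ gronwallBound ‖(1 : R)‖ (‖ε‖ * b) 0 (x - 0) := by
    refine norm_le_gronwallBound_of_norm_deriv_right_le
      (fun t ht => (hW t ht.1).continuousWithinAt.mono Icc_subset_Ici_self)
      (fun t ht => (hW t ht.1).mono (Ici_subset_Ici.2 ht.1)) (by rw [hW0]) (fun t ht => ?_) x hx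
    calc ‖ε • (B t * W t)‖ ≤ ‖ε‖ * (‖B t‖ * ‖W t‖) := by
          rw [norm_smul]; gcongr; exact norm_mul_le _ _
      _ ≤ ‖ε‖ * (b * ‖W t‖) := by gcongr; exact hB t (Ico_subset_Icc_self ht)
      _ = ‖ε‖ * b * ‖W t‖ + 0 := by ring
  rwa [sub_zero, gronwallBound_ε0] at gronwall

lemma norm_integral_mul_le_of_norm_le {F G : ℝ → R} {M : ℝ} (hF : ∀ t ∈ Icc 0 l, ‖F t‖ ≤ b)
    (hG : ∀ t ∈ Icc 0 l, ‖G t‖ ≤ M) {x : ℝ} (hx : x ∈ Icc 0 l) :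
    ‖∫ t in (0 : ℝ)..x, F t * G t‖ ≤ b * M * l := by
  have hb : 0 ≤ b := (norm_nonneg _).trans (hF x hx)
  have hM : 0 ≤ M := (norm_nonneg _).trans (hG x hx)
  have norm_mul_le_mul : ∀ t ∈ uIoc 0 x, ‖F t * G t‖ ≤ b * M := fun t ht => by
    rw [uIoc_of_le hx.1] at ht
    have ht' : t ∈ Icc 0 l := ⟨ht.1.le, ht.2.trans hx.2⟩
    exact (norm_mul_le _ _).trans (mul_le_mul (hF t ht') (hG t ht') (norm_nonneg _) hb)
  refine (intervalIntegral.norm_integral_le_of_norm_le_const norm_mul_le_mul).trans ?_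
  rw [sub_zero, abs_of_nonneg hx.1]
  exact mul_le_mul_of_nonneg_left hx.2 (mul_nonneg hb hM)

variable [CompleteSpace R]

lemma sub_one_eq_smul_integral_of_hasDerivWithinAt (hW0 : W 0 = 1)
    (hW : ∀ x ∈ Ici (0 : ℝ), HasDerivWithinAt W (ε • (B x * W x)) (Ici 0) x)
    (hB : ContinuousOn B (Ici 0)) {x : ℝ} (hx : 0 ≤ x) :
    W x - 1 = ε • ∫ t in (0 : ℝ)..x, B t * W t := by
  have hWcont : ContinuousOn W (Ici 0) := fun t ht => (hW t ht).continuousWithinAt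
  have hderiv_cont : ContinuousOn (fun t => ε • (B t * W t)) (Icc 0 x) :=
    ((hB.mul hWcont).const_smul ε).mono Icc_subset_Ici_self
  rw [← intervalIntegral.integral_smul, ← hW0]
  exact (intervalIntegral.integral_eq_sub_of_hasDeriv_right_of_le hx
    (hWcont.mono Icc_subset_Ici_self)
    (fun t ht => (hW t ht.1.le).mono fun y hy => ht.1.le.trans (le_of_lt hy))
    (hderiv_cont.intervalIntegrable_of_Icc hx)).symm

lemma norm_sub_one_sub_smul_integral_le (hW0 : W 0 = 1)
    (hW : ∀ x ∈ Ici (0 : ℝ), HasDerivWithinAt W (ε • (B x * W x)) (Ici 0) x)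
    (hBcont : ContinuousOn B (Ici 0)) (hB : ∀ x ∈ Icc 0 l, ‖B x‖ ≤ b) (hl : 0 ≤ l)
    (hε : ‖ε‖ ≤ 1) :
    ‖W l - 1 - ε • ∫ t in (0 : ℝ)..l, B t‖ ≤
      (b * l) ^ 2 * (‖(1 : R)‖ * Real.exp (b * l)) * ‖ε‖ ^ 2 := by
  set M := ‖(1 : R)‖ * Real.exp (b * l)
  have hb : 0 ≤ b := (norm_nonneg _).trans (hB 0 ⟨le_rfl, hl⟩)
  have hWcont : ContinuousOn W (Ici 0) := fun t ht => (hW t ht).continuousWithinAt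
  have norm_W_le : ∀ t ∈ Icc 0 l, ‖W t‖ ≤ M := fun t ht => by
    refine (norm_le_exp_of_hasDerivWithinAt_smul_mul hW0 hW hB ht).trans
      (mul_le_mul_of_nonneg_left (Real.exp_le_exp.2 ?_) (norm_nonneg _))
    calc ‖ε‖ * b * t ≤ 1 * b * l := by gcongr; exacts [ht.1, ht.2]
      _ = b * l := by rw [one_mul]
  have norm_sub_one_le : ∀ x ∈ Icc 0 l, ‖W x - 1‖ ≤ ‖ε‖ * (b * M * l) := fun x hx => by
    rw [sub_one_eq_smul_integral_of_hasDerivWithinAt hW0 hW hBcont hx.1, norm_smul]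
    gcongr
    exact norm_integral_mul_le_of_norm_le hB norm_W_le hx
  have hB_int : IntervalIntegrable B volume 0 l :=
    (hBcont.mono Icc_subset_Ici_self).intervalIntegrable_of_Icc hl
  have hBW_int : IntervalIntegrable (fun t => B t * W t) volume 0 l :=
    ((hBcont.mul hWcont).mono Icc_subset_Ici_self).intervalIntegrable_of_Icc hl
  have remainder : W l - 1 - ε • ∫ t in (0 : ℝ)..l, B t =
      ε • ∫ t in (0 : ℝ)..l, B t * (W t - 1) := by
    simp only [mul_sub, mul_one]
    rw [sub_one_eq_smul_integral_of_hasDerivWithinAt hW0 hW hBcont hl, ← smul_sub,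
      intervalIntegral.integral_sub hBW_int hB_int]
  calc ‖W l - 1 - ε • ∫ t in (0 : ℝ)..l, B t‖
      ≤ ‖ε‖ * (b * (‖ε‖ * (b * M * l)) * l) := by
        rw [remainder, norm_smul]
        gcongr
        exact norm_integral_mul_le_of_norm_le hB norm_sub_one_le ⟨hl, le_rfl⟩
    _ = (b * l) ^ 2 * M * ‖ε‖ ^ 2 := by ring

lemma hasDerivAt_of_hasDerivWithinAt_sub_smul_mul {Φ : ℝ → ℂ → R} {z₀ : ℂ}
    (hΦ0 : ∀ z, Φ 0 z = 1)
    (hΦ : ∀ z, ∀ x ∈ Ici (0 : ℝ),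
      HasDerivWithinAt (Φ · z) ((z - z₀) • (B x * Φ x z)) (Ici 0) x)
    (hB : ContinuousOn B (Ici 0)) (hl : 0 ≤ l) :
    HasDerivAt (Φ l) (∫ t in (0 : ℝ)..l, B t) z₀ := by
  obtain ⟨b, hb⟩ := isCompact_Icc.exists_bound_of_continuousOn
    (hB.mono (Icc_subset_Ici_self : Icc 0 l ⊆ Ici 0))
  set G := ∫ t in (0 : ℝ)..l, B t
  have remainder_isBigO : (fun z => Φ l z - 1 - (z - z₀) • G) =O[𝓝 z₀] fun z => ‖z - z₀‖ ^ 2 := by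
    refine Asymptotics.IsBigO.of_bound ((b * l) ^ 2 * (‖(1 : R)‖ * Real.exp (b * l))) ?_
    filter_upwards [Metric.closedBall_mem_nhds z₀ one_pos] with z hz
    rw [norm_pow, norm_norm]
    exact norm_sub_one_sub_smul_integral_le (hΦ0 z) (hΦ z) hB hb hl (mem_closedBall_iff_norm.1 hz)
  have remainder_hasDerivAt : HasDerivAt (fun z => Φ l z - 1 - (z - z₀) • G) 0 z₀ := by
    simpa using (remainder_isBigO.hasFDerivAt one_lt_two).hasDerivAt
  have linear_hasDerivAt : HasDerivAt (fun z => 1 + (z - z₀) • G) G z₀ := by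
    simpa using (((hasDerivAt_id z₀).sub_const z₀).smul_const G).const_add 1
  simpa [sub_sub] using remainder_hasDerivAt.fun_add linear_hasDerivAt

end Perturbation

section LocallyUniformLimit

lemma exists_differentiableOn_tendsto_of_dist_le_mul {E β : Type*} [NormedAddCommGroup E]
    [NormedSpace ℂ E] [CompleteSpace E] [Nonempty β] [SemilatticeSup β] {F : β → ℂ → E}
    {C : ℂ → ℝ} {r : β → ℝ} {S : Set ℂ} (hS : IsOpen S) (hF : ∀ n, DifferentiableOn ℂ (F n) S)
    (hC : ContinuousOn C S) (hr : Tendsto r atTop (𝓝 0))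
    (hdist : ∀ z ∈ S, ∀ n m, n ≤ m → dist (F n z) (F m z) ≤ C z * r n) :
    ∃ f : ℂ → E, DifferentiableOn ℂ f S ∧
      ∀ z ∈ S, Tendsto (fun n => F n z) atTop (𝓝 (f z)) := by
  have cauchy : ∀ z ∈ S, CauchySeq fun n => F n z := fun z hz =>
    cauchySeq_of_le_tendsto_0' _ (hdist z hz) (by simpa using hr.const_mul (C z))
  have exists_limit : ∀ z, ∃ a, z ∈ S → Tendsto (fun n => F n z) atTop (𝓝 a) := fun z => by
    by_cases hz : z ∈ S
    · exact (cauchySeq_tendsto_of_complete (cauchy z hz)).imp fun a ha _ => ha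
    · exact ⟨0, fun h => absurd h hz⟩
  choose f hf using exists_limit
  have dist_limit_le : ∀ z ∈ S, ∀ n, dist (F n z) (f z) ≤ C z * r n := fun z hz n =>
    le_of_tendsto (tendsto_const_nhds.dist (hf z hz))
      ((eventually_ge_atTop n).mono fun m hm => hdist z hz n m hm)
  have locally_uniform : TendstoLocallyUniformlyOn F f atTop S := by
    rw [Metric.tendstoLocallyUniformlyOn_iff]
    intro ε hε z₀ hz₀
    have small : ∀ᶠ p in 𝓝[S] z₀ ×ˢ atTop, C p.1 * r p.2 < ε := by
      have := ((hC z₀ hz₀).tendsto.comp tendsto_fst).mul (hr.comp tendsto_snd)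
      rw [mul_zero] at this
      exact this.eventually_lt_const hε
    obtain ⟨P, hP, Q, hQ, hPQ⟩ := eventually_prod_iff.1 small
    refine ⟨{z | P z} ∩ S, inter_mem hP self_mem_nhdsWithin, hQ.mono fun n hn z hz => ?_⟩
    rw [dist_comm]
    exact (dist_limit_le z hz.2 n).trans_lt (hPQ hz.1 hn)
  exact ⟨f, locally_uniform.differentiableOn (.of_forall hF) hS, fun z => hf z⟩

end LocallyUniformLimit

section HermitianForm

variable {ι κ : Type*} [Fintype ι] [Fintype κ]

/-- The quadratic form `y* J y` of a Hermitian matrix `J`; the real part makes it real-valued for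
every `J`. -/
noncomputable def hermForm (J : Matrix ι ι ℂ) (y : ι → ℂ) : ℝ := (star y ⬝ᵥ J *ᵥ y).re

lemma continuous_hermForm (J : Matrix ι ι ℂ) : Continuous (hermForm J) := by
  unfold hermForm
  fun_prop

lemma hermForm_conjTranspose_mul_mul (J : Matrix ι ι ℂ) (U : Matrix ι κ ℂ) (c : κ → ℂ) :
    hermForm (Uᴴ * J * U) c = hermForm J (U *ᵥ c) := by
  rw [hermForm, hermForm, Matrix.mul_assoc, ← mulVec_mulVec, dotProduct_mulVec, ← star_mulVec,
    ← mulVec_mulVec]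

lemma hermForm_conjTranspose_mul_self (U : Matrix ι κ ℂ) (c : κ → ℂ) :
    hermForm (Uᴴ * U) c = ‖toLp 2 (U *ᵥ c)‖ ^ 2 := by
  rw [hermForm, ← mulVec_mulVec, dotProduct_mulVec, ← star_mulVec, ← @inner_self_eq_norm_sq ℂ,
    EuclideanSpace.inner_eq_star_dotProduct, dotProduct_comm]
  rfl

lemma hermForm_smul (r : ℝ) (J : Matrix ι ι ℂ) (c : ι → ℂ) :
    hermForm ((r : ℂ) • J) c = r * hermForm J c := by
  simp [hermForm, smul_mulVec]

lemma hasDerivWithinAt_hermForm {M : ℝ → Matrix ι ι ℂ} {M' : Matrix ι ι ℂ} {s : Set ℝ} {x : ℝ}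
    (hM : HasDerivWithinAt M M' s x) (c : ι → ℂ) :
    HasDerivWithinAt (fun t => hermForm (M t) c) (hermForm M' c) s x := by
  rw [hasDerivWithinAt_matrix_iff] at hM
  refine Complex.reCLM.hasFDerivAt.comp_hasDerivWithinAt x (HasDerivWithinAt.fun_sum fun i _ => ?_)
  exact (HasDerivWithinAt.fun_sum fun k _ => (hM i k).mul_const (c k)).const_mul (star c i)

end HermitianForm

section EuclideanNorm

variable {ι κ : Type*} [Fintype ι] [Fintype κ]

lemma conjTranspose_mul_self_apply_eq_inner [DecidableEq κ] (Y : Matrix ι κ ℂ) (i k : κ) :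
    (Yᴴ * Y) i k =
      inner ℂ (toLp 2 (Y *ᵥ Pi.single i 1)) (toLp 2 (Y *ᵥ Pi.single k 1)) := by
  simp [EuclideanSpace.inner_eq_star_dotProduct, mul_apply, dotProduct, mul_comm]

lemma integrable_conjTranspose_mul_self_apply_iff {α : Type*} [MeasurableSpace α]
    {μ : Measure α} {Y : α → Matrix ι κ ℂ} :
    (∀ i k, Integrable (fun x => ((Y x)ᴴ * Y x) i k) μ) ↔
      ∀ ξ : κ → ℂ, Integrable (fun x => ‖toLp 2 (Y x *ᵥ ξ)‖ ^ 2) μ := by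
  classical
  refine ⟨fun h ξ => ?_, fun h i k => ?_⟩
  · simp only [← hermForm_conjTranspose_mul_self, hermForm, dotProduct, mulVec]
    exact (integrable_finsetSum _ fun i _ => (integrable_finsetSum _ fun k _ =>
      (h i k).mul_const (ξ k)).const_mul (star ξ i)).re
  · simp only [conjTranspose_mul_self_apply_eq_inner, inner_eq_sum_norm_sq_div_four (𝕜 := ℂ),
      ← toLp_smul, ← toLp_add, ← toLp_sub, ← mulVec_smul, ← mulVec_add, ← mulVec_sub]
    have := fun ξ => (h ξ).ofReal (𝕜 := ℂ)
    push_cast at this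
    exact (((this _).sub (this _)).add (((this _).sub (this _)).mul_const _)).div_const 4

lemma norm_toLp_sub_sq_le (y w : ι → ℂ) :
    ‖toLp 2 (y - w)‖ ^ 2 ≤ 2 * (‖toLp 2 y‖ ^ 2 + ‖toLp 2 w‖ ^ 2) := by
  have := parallelogram_law_with_norm ℂ (toLp 2 y) (toLp 2 w)
  rw [toLp_sub]
  nlinarith [sq_nonneg ‖toLp 2 y + toLp 2 w‖]

lemma norm_toLp_sumElim_sq (a : ι → ℂ) (b : κ → ℂ) :
    ‖toLp 2 (Sum.elim a b)‖ ^ 2 = ‖toLp 2 a‖ ^ 2 + ‖toLp 2 b‖ ^ 2 := by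
  simp [EuclideanSpace.norm_sq_eq]

lemma l2_opNorm_le_of_forall_norm_mulVec_le [DecidableEq κ] {A : Matrix ι κ ℂ} {C : ℝ}
    (hC : 0 ≤ C) (hA : ∀ ξ : κ → ℂ, ‖toLp 2 (A *ᵥ ξ)‖ ≤ C * ‖toLp 2 ξ‖) : ‖A‖ ≤ C :=
  l2_opNorm_def A ▸ ContinuousLinearMap.opNorm_le_bound _ hC fun ξ => hA (ofLp ξ)

end EuclideanNorm

section MatrixInverse

lemma differentiableOn_matrix_inv {ι : Type*} [Fintype ι] [DecidableEq ι] {f : ℂ → Matrix ι ι ℂ}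
    {s : Set ℂ} (hf : DifferentiableOn ℂ f s) (hunit : ∀ z ∈ s, IsUnit (f z)) :
    DifferentiableOn ℂ (fun z => (f z)⁻¹) s := by
  simp only [nonsing_inv_eq_ringInverse]
  exact hf.inverse hunit

end MatrixInverse

section DiracSystem

variable {ι : Type*} [Fintype ι] [DecidableEq ι] {J : Matrix ι ι ℂ} {V : ℝ → Matrix ι ι ℂ}
  {u : ℝ → ℂ → Matrix ι ι ℂ}

/-- `u x z` is the fundamental solution, normalized by `u 0 z = 1`, of a Dirac-type system
`y' = i (z J + J V(x)) y` on `[0, ∞)`, where `J` is a Hermitian involution of arbitrary signature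
and `V` is an arbitrary Hermitian potential. -/
structure IsDiracFundamentalSolution (J : Matrix ι ι ℂ) (V : ℝ → Matrix ι ι ℂ)
    (u : ℝ → ℂ → Matrix ι ι ℂ) : Prop where
  involution : J * J = 1
  isHermitian : J.IsHermitian
  isHermitian_potential : ∀ x ∈ Ici (0 : ℝ), (V x).IsHermitian
  initial : ∀ z, u 0 z = 1
  hasDerivWithinAt : ∀ z, ∀ x ∈ Ici (0 : ℝ),
    HasDerivWithinAt (u · z) ((Complex.I • (z • J + J * V x)) * u x z) (Ici 0) x

namespace IsDiracFundamentalSolution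

lemma lagrange_identity (hu : IsDiracFundamentalSolution J V u) (X Y : Matrix ι ι ℂ) (w z : ℂ)
    {x : ℝ} (hx : x ∈ Ici (0 : ℝ)) :
    ((Complex.I • (w • J + J * V x)) * X)ᴴ * J * Y
      + Xᴴ * J * ((Complex.I • (z • J + J * V x)) * Y) = (Complex.I * (z - star w)) • (Xᴴ * Y) := by
  have left_factor : ((Complex.I • (w • J + J * V x)) * X)ᴴ * J =
      (-Complex.I) • (Xᴴ * (star w • 1 + V x)) := by
    rw [conjTranspose_mul, conjTranspose_smul, conjTranspose_add, conjTranspose_smul,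
      conjTranspose_mul, hu.isHermitian.eq, (hu.isHermitian_potential x hx).eq, mul_assoc,
      smul_mul_assoc, add_mul, smul_mul_assoc, mul_assoc, hu.involution, mul_one, mul_smul_comm,
      Complex.star_def, Complex.conj_I]
  have right_factor : J * (Complex.I • (z • J + J * V x)) = Complex.I • (z • 1 + V x) := by
    rw [mul_smul_comm, mul_add, mul_smul_comm, ← mul_assoc, hu.involution, one_mul]
  rw [left_factor, mul_assoc Xᴴ, ← mul_assoc J, right_factor]
  simp only [smul_mul_assoc, mul_smul_comm, mul_add, add_mul, mul_one, one_mul, smul_add,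
    smul_smul, mul_sub, sub_smul, neg_mul, neg_smul, mul_assoc]
  abel

lemma hasDerivWithinAt_conjTranspose_mul_mul (hu : IsDiracFundamentalSolution J V u) (w z : ℂ)
    {x : ℝ} (hx : x ∈ Ici (0 : ℝ)) :
    HasDerivWithinAt (fun y => (u y w)ᴴ * J * u y z)
      ((Complex.I * (z - star w)) • ((u x w)ᴴ * u x z)) (Ici 0) x := by
  have product_rule :=
    ((hu.hasDerivWithinAt w x hx).star.mul_const J).mul (hu.hasDerivWithinAt z x hx)
  rw [star_eq_conjTranspose, star_eq_conjTranspose, hu.lagrange_identity _ _ _ _ hx]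
    at product_rule
  exact product_rule

lemma continuousOn (hu : IsDiracFundamentalSolution J V u) (z : ℂ) :
    ContinuousOn (u · z) (Ici 0) :=
  fun x hx => (hu.hasDerivWithinAt z x hx).continuousWithinAt

lemma conjTranspose_star_mul_mul_self (hu : IsDiracFundamentalSolution J V u) (z : ℂ) {x : ℝ}
    (hx : 0 ≤ x) : (u x (star z))ᴴ * J * u x z = J := by
  have constant := constant_of_has_deriv_right_zero (f := fun y => (u y (star z))ᴴ * J * u y z)
    (fun y hy => (hu.hasDerivWithinAt_conjTranspose_mul_mul _ z
      hy.1).continuousWithinAt.mono Icc_subset_Ici_self)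
    (fun y hy => by
      simpa using (hu.hasDerivWithinAt_conjTranspose_mul_mul (star z) z hy.1).mono
        (Ici_subset_Ici.2 hy.1)) x ⟨hx, le_rfl⟩
  simpa [hu.initial] using constant

lemma mul_inv_mul_eq (hu : IsDiracFundamentalSolution J V u) (z₀ z : ℂ) {x : ℝ} (hx : 0 ≤ x) :
    u x z₀ * (J * (u x (star z₀))ᴴ * J * u x z) = u x z := by
  have mul_inv : u x z₀ * (J * (u x (star z₀))ᴴ * J) = 1 := by
    rw [mul_eq_one_comm, mul_assoc, mul_assoc, ← mul_assoc (u x (star z₀))ᴴ,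
      hu.conjTranspose_star_mul_mul_self z₀ hx, hu.involution]
  rw [← mul_assoc, mul_inv, one_mul]

lemma hasDerivWithinAt_inv_mul (hu : IsDiracFundamentalSolution J V u) (z₀ z : ℂ) {x : ℝ}
    (hx : x ∈ Ici (0 : ℝ)) :
    HasDerivWithinAt (fun y => J * (u y (star z₀))ᴴ * J * u y z)
      ((z - z₀) • (Complex.I • (J * (u x (star z₀))ᴴ * u x z₀) *
        (J * (u x (star z₀))ᴴ * J * u x z))) (Ici 0) x := by
  have lagrange := (hu.hasDerivWithinAt_conjTranspose_mul_mul (star z₀) z hx).const_mul J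
  rw [smul_mul_assoc, mul_assoc, hu.mul_inv_mul_eq z₀ z hx, smul_smul, mul_comm (z - z₀)]
  simpa only [mul_assoc, mul_smul_comm, star_star] using lagrange

lemma differentiable (hu : IsDiracFundamentalSolution J V u) {l : ℝ} (hl : 0 ≤ l) :
    Differentiable ℂ (u l) := fun z₀ => by
  have coeff_continuousOn :
      ContinuousOn (fun x => Complex.I • (J * (u x (star z₀))ᴴ * u x z₀)) (Ici 0) :=
    ((continuousOn_const.mul (hu.continuousOn (star z₀)).star).mul
      (hu.continuousOn z₀)).const_smul Complex.I
  have hasDerivAt := hasDerivAt_of_hasDerivWithinAt_sub_smul_mul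
    (Φ := fun x z => J * (u x (star z₀))ᴴ * J * u x z)
    (fun z => by simp [hu.initial, hu.involution])
    (fun z x hx => hu.hasDerivWithinAt_inv_mul z₀ z hx) coeff_continuousOn hl
  exact (hasDerivAt.const_mul (u l z₀)).differentiableAt.congr_of_eventuallyEq
    (.of_forall fun z => (hu.mul_inv_mul_eq z₀ z hl).symm)

lemma hasDerivWithinAt_hermForm (hu : IsDiracFundamentalSolution J V u) (z : ℂ) (c : ι → ℂ)
    {x : ℝ} (hx : x ∈ Ici (0 : ℝ)) :
    HasDerivWithinAt (fun y => hermForm J (u y z *ᵥ c))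
      (-(2 * z.im) * ‖toLp 2 (u x z *ᵥ c)‖ ^ 2) (Ici 0) x := by
  have coeff : Complex.I * (z - star z) = ((-(2 * z.im) : ℝ) : ℂ) := by
    apply Complex.ext <;> simp; ring
  have lagrange := _root_.hasDerivWithinAt_hermForm
    (hu.hasDerivWithinAt_conjTranspose_mul_mul z z hx) c
  simpa only [hermForm_conjTranspose_mul_mul, coeff, hermForm_smul,
    hermForm_conjTranspose_mul_self] using lagrange

lemma continuousOn_norm_mulVec_sq (hu : IsDiracFundamentalSolution J V u) (z : ℂ) (c : ι → ℂ) :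
    ContinuousOn (fun x => ‖toLp 2 (u x z *ᵥ c)‖ ^ 2) (Ici 0) := by
  have : Continuous fun M : Matrix ι ι ℂ => ‖toLp 2 (M *ᵥ c)‖ ^ 2 := by fun_prop
  exact this.comp_continuousOn (hu.continuousOn z)

lemma intervalIntegrable_norm_mulVec_sq (hu : IsDiracFundamentalSolution J V u) (z : ℂ)
    (c : ι → ℂ) {a b : ℝ} (ha : 0 ≤ a) (hab : a ≤ b) :
    IntervalIntegrable (fun x => ‖toLp 2 (u x z *ᵥ c)‖ ^ 2) volume a b :=
  ((hu.continuousOn_norm_mulVec_sq z c).mono fun _ hx =>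
    ha.trans hx.1).intervalIntegrable_of_Icc hab

lemma energy_identity (hu : IsDiracFundamentalSolution J V u) (z : ℂ) (c : ι → ℂ) {a b : ℝ}
    (ha : 0 ≤ a) (hab : a ≤ b) :
    hermForm J (u a z *ᵥ c) - hermForm J (u b z *ᵥ c) =
      2 * z.im * ∫ x in a..b, ‖toLp 2 (u x z *ᵥ c)‖ ^ 2 := by
  have ftc := intervalIntegral.integral_eq_sub_of_hasDeriv_right_of_le hab
    (fun x hx => (hu.hasDerivWithinAt_hermForm z c (ha.trans hx.1)).continuousWithinAt.mono
      fun y hy => ha.trans hy.1)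
    (fun x hx => (hu.hasDerivWithinAt_hermForm z c (ha.trans hx.1.le)).mono
      fun y hy => (ha.trans hx.1.le).trans (le_of_lt hy))
    ((hu.intervalIntegrable_norm_mulVec_sq z c ha hab).const_mul _)
  rw [intervalIntegral.integral_const_mul] at ftc
  linarith

lemma hermForm_mulVec_antitoneOn (hu : IsDiracFundamentalSolution J V u) {z : ℂ} (hz : 0 ≤ z.im)
    (c : ι → ℂ) : AntitoneOn (fun x => hermForm J (u x z *ᵥ c)) (Ici 0) := fun a ha b _ hab => by
  have integral_nonneg : 0 ≤ ∫ x in a..b, ‖toLp 2 (u x z *ᵥ c)‖ ^ 2 :=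
    intervalIntegral.integral_nonneg hab fun _ _ => sq_nonneg _
  have energy := hu.energy_identity z c ha hab
  have : 0 ≤ 2 * z.im * ∫ x in a..b, ‖toLp 2 (u x z *ᵥ c)‖ ^ 2 := by positivity
  linarith

end IsDiracFundamentalSolution

end DiracSystem

section Signature

lemma jMat_mul_self (m₁ m₂ : ℕ) : jMat m₁ m₂ * jMat m₁ m₂ = 1 := by
  simp [jMat, fromBlocks_multiply]

lemma isHermitian_jMat (m₁ m₂ : ℕ) : (jMat m₁ m₂).IsHermitian := by
  simp [IsHermitian, jMat, fromBlocks_conjTranspose]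

variable {m₁ m₂ : ℕ}

lemma isHermitian_VMat (v : ℝ → Matrix (Fin m₁) (Fin m₂) ℂ) (x : ℝ) : (VMat v x).IsHermitian := by
  simp [IsHermitian, VMat, fromBlocks_conjTranspose]

lemma hermForm_jMat_sumElim (a : Fin m₁ → ℂ) (b : Fin m₂ → ℂ) :
    hermForm (jMat m₁ m₂) (Sum.elim a b) = ‖toLp 2 a‖ ^ 2 - ‖toLp 2 b‖ ^ 2 := by
  simp [hermForm, jMat, fromBlocks_mulVec, neg_mulVec, dotProduct, EuclideanSpace.norm_sq_eq,
    ← Complex.normSq_eq_norm_sq, Complex.normSq_apply, sub_eq_add_neg]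

lemma neg_hermForm_jMat_le (y : Fin m₁ ⊕ Fin m₂ → ℂ) :
    -hermForm (jMat m₁ m₂) y ≤ ‖toLp 2 y‖ ^ 2 := by
  rw [← Sum.elim_comp_inl_inr y, hermForm_jMat_sumElim, norm_toLp_sumElim_sq]
  linarith [sq_nonneg ‖toLp 2 (y ∘ Sum.inl)‖]

lemma mulVec_sumElim (U : Matrix (Fin m₁ ⊕ Fin m₂) (Fin m₁ ⊕ Fin m₂) ℂ) (ξ : Fin m₁ → ℂ)
    (w : Fin m₂ → ℂ) :
    U *ᵥ Sum.elim ξ w = Sum.elim (U.toBlocks₁₁ *ᵥ ξ + U.toBlocks₁₂ *ᵥ w)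
      (U.toBlocks₂₁ *ᵥ ξ + U.toBlocks₂₂ *ᵥ w) := by
  conv_lhs => rw [← fromBlocks_toBlocks U]
  simp [fromBlocks_mulVec]

end Signature

section WeylDiscs

variable {m₁ m₂ : ℕ} {V : ℝ → Matrix (Fin m₁ ⊕ Fin m₂) (Fin m₁ ⊕ Fin m₂) ℂ}
  {u : ℝ → ℂ → Matrix (Fin m₁ ⊕ Fin m₂) (Fin m₁ ⊕ Fin m₂) ℂ} {z : ℂ} {x l : ℝ}
  {φ ψ : Matrix (Fin m₂) (Fin m₁) ℂ}

/-- The matrix Weyl disc at `x`: all `φ` with `[I φ*] u(x,z)* j u(x,z) [I; φ] ≥ 0`. -/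
def weylDisc (u : ℝ → ℂ → Matrix (Fin m₁ ⊕ Fin m₂) (Fin m₁ ⊕ Fin m₂) ℂ) (x : ℝ) (z : ℂ) :
    Set (Matrix (Fin m₂) (Fin m₁) ℂ) :=
  {φ | ∀ ξ, 0 ≤ hermForm (jMat m₁ m₂) (u x z *ᵥ Sum.elim ξ (φ *ᵥ ξ))}

/-- The point `-u₂₂(l,z)⁻¹ u₂₁(l,z)` of the Weyl disc at `l`: it makes the lower block of
`u(l,z) [I; φ]` vanish. -/
noncomputable def weylApprox (u : ℝ → ℂ → Matrix (Fin m₁ ⊕ Fin m₂) (Fin m₁ ⊕ Fin m₂) ℂ) (l : ℝ)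
    (z : ℂ) : Matrix (Fin m₂) (Fin m₁) ℂ :=
  -((u l z).toBlocks₂₂⁻¹ * (u l z).toBlocks₂₁)

lemma isClosed_weylDisc : IsClosed (weylDisc u x z) := by
  have continuous_sumElim : ∀ ξ : Fin m₁ → ℂ,
      Continuous fun φ : Matrix (Fin m₂) (Fin m₁) ℂ => Sum.elim ξ (φ *ᵥ ξ) := fun ξ => by
    refine continuous_pi (Sum.rec (fun _ => continuous_const) fun i => ?_)
    exact (continuous_apply i).comp (continuous_id.matrix_mulVec continuous_const)
  rw [weylDisc, ofPred_forall]
  exact isClosed_iInter fun ξ => isClosed_le continuous_const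
    ((continuous_hermForm _).comp (continuous_const.matrix_mulVec (continuous_sumElim ξ)))

lemma isWeylFunction_iff {φ : ℂ → Matrix (Fin m₂) (Fin m₁) ℂ} :
    IsWeylFunction u φ ↔ DifferentiableOn ℂ φ {z | 0 < z.im} ∧ ∀ z : ℂ, 0 < z.im → ∀ ξ,
      IntegrableOn (fun x => ‖toLp 2 (u x z *ᵥ Sum.elim ξ (φ z *ᵥ ξ))‖ ^ 2) (Ici 0) := by
  have gram : ∀ (U : Matrix (Fin m₁ ⊕ Fin m₂) (Fin m₁ ⊕ Fin m₂) ℂ)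
      (C : Matrix (Fin m₁ ⊕ Fin m₂) (Fin m₁) ℂ), Cᴴ * Uᴴ * U * C = (U * C)ᴴ * (U * C) :=
    fun U C => by rw [conjTranspose_mul, Matrix.mul_assoc]
  simp only [IsWeylFunction, gram, IntegrableOn, integrable_conjTranspose_mul_self_apply_iff,
    ← mulVec_mulVec, fromRows_mulVec, one_mulVec, differentiableOn_matrix_iff]

lemma sumElim_mulVec_sub (φ ψ : Matrix (Fin m₂) (Fin m₁) ℂ) (ξ : Fin m₁ → ℂ) :
    Sum.elim (0 : Fin m₁ → ℂ) ((φ - ψ) *ᵥ ξ) =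
      Sum.elim ξ (φ *ᵥ ξ) - Sum.elim ξ (ψ *ᵥ ξ) := by
  ext (i | i) <;> simp [sub_mulVec]

namespace IsDiracFundamentalSolution

lemma weylDisc_antitoneOn (hu : IsDiracFundamentalSolution (jMat m₁ m₂) V u) (hz : 0 ≤ z.im) :
    AntitoneOn (weylDisc u · z) (Ici 0) := fun _ ha _ hb hab _ hφ ξ =>
  (hφ ξ).trans (hu.hermForm_mulVec_antitoneOn hz _ ha hb hab)

lemma hermForm_mulVec_sumElim_zero_le (hu : IsDiracFundamentalSolution (jMat m₁ m₂) V u)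
    (hz : 0 ≤ z.im) (hx : 0 ≤ x) (w : Fin m₂ → ℂ) :
    hermForm (jMat m₁ m₂) (u x z *ᵥ Sum.elim 0 w) ≤ -‖toLp 2 w‖ ^ 2 := by
  simpa [hu.initial, hermForm_jMat_sumElim] using
    hu.hermForm_mulVec_antitoneOn hz (Sum.elim 0 w) self_mem_Ici hx hx

lemma norm_sq_le_norm_mulVec_sumElim_zero_sq (hu : IsDiracFundamentalSolution (jMat m₁ m₂) V u)
    (hz : 0 ≤ z.im) (hx : 0 ≤ x) (w : Fin m₂ → ℂ) :
    ‖toLp 2 w‖ ^ 2 ≤ ‖toLp 2 (u x z *ᵥ Sum.elim 0 w)‖ ^ 2 := by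
  linarith [hu.hermForm_mulVec_sumElim_zero_le hz hx w,
    neg_hermForm_jMat_le (u x z *ᵥ Sum.elim 0 w)]

lemma norm_sub_mulVec_sq_le (hu : IsDiracFundamentalSolution (jMat m₁ m₂) V u)
    (hz : 0 ≤ z.im) (hx : 0 ≤ x) (φ ψ : Matrix (Fin m₂) (Fin m₁) ℂ) (ξ : Fin m₁ → ℂ) :
    ‖toLp 2 ((φ - ψ) *ᵥ ξ)‖ ^ 2 ≤ 2 * (‖toLp 2 (u x z *ᵥ Sum.elim ξ (φ *ᵥ ξ))‖ ^ 2 +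
      ‖toLp 2 (u x z *ᵥ Sum.elim ξ (ψ *ᵥ ξ))‖ ^ 2) := by
  refine (hu.norm_sq_le_norm_mulVec_sumElim_zero_sq hz hx _).trans ?_
  rw [sumElim_mulVec_sub, mulVec_sub]
  exact norm_toLp_sub_sq_le _ _

lemma isUnit_toBlocks₂₂ (hu : IsDiracFundamentalSolution (jMat m₁ m₂) V u) (hz : 0 ≤ z.im)
    (hl : 0 ≤ l) : IsUnit (u l z).toBlocks₂₂ := by
  rw [← mulVec_injective_iff_isUnit, ← coe_mulVecLin, injective_iff_map_eq_zero]
  intro w hw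
  rw [mulVecLin_apply] at hw
  have energy := hu.hermForm_mulVec_sumElim_zero_le hz hl w
  simp only [mulVec_sumElim, hw, hermForm_jMat_sumElim, mulVec_zero, zero_add, toLp_zero,
    norm_zero] at energy
  have : ‖toLp 2 w‖ ^ 2 = 0 := by
    nlinarith [sq_nonneg ‖toLp 2 w‖, sq_nonneg ‖toLp 2 ((u l z).toBlocks₁₂ *ᵥ w)‖]
  simpa using this

lemma weylApprox_mem_weylDisc (hu : IsDiracFundamentalSolution (jMat m₁ m₂) V u)
    (hz : 0 ≤ z.im) (hl : 0 ≤ l) : weylApprox u l z ∈ weylDisc u l z := fun ξ => by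
  have lower_block : (u l z).toBlocks₂₁ *ᵥ ξ + (u l z).toBlocks₂₂ *ᵥ weylApprox u l z *ᵥ ξ = 0 := by
    have det_unit := (isUnit_iff_isUnit_det _).1 (hu.isUnit_toBlocks₂₂ hz hl)
    rw [weylApprox, neg_mulVec, mulVec_neg, mulVec_mulVec, mul_nonsing_inv_cancel_left _ _ det_unit,
      add_neg_cancel]
  rw [mulVec_sumElim, lower_block, hermForm_jMat_sumElim]
  simp

lemma differentiableOn_weylApprox (hu : IsDiracFundamentalSolution (jMat m₁ m₂) V u)
    (hl : 0 ≤ l) : DifferentiableOn ℂ (weylApprox u l) {z | 0 < z.im} := by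
  have entries := differentiableOn_matrix_iff.1
    ((hu.differentiable hl).differentiableOn (s := {z | 0 < z.im}))
  have inv_differentiable : DifferentiableOn ℂ (fun z => (u l z).toBlocks₂₂⁻¹) {z | 0 < z.im} :=
    differentiableOn_matrix_inv
      (differentiableOn_matrix_iff.2 fun i k => entries (Sum.inr i) (Sum.inr k))
      fun _ hz => hu.isUnit_toBlocks₂₂ (le_of_lt hz) hl
  refine differentiableOn_matrix_iff.2 fun i k => (DifferentiableOn.fun_sum fun a _ => ?_).fun_neg
  exact (differentiableOn_matrix_iff.1 inv_differentiable i a).mul (entries (Sum.inr a) (Sum.inl k))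

lemma integral_norm_mulVec_sq_le (hu : IsDiracFundamentalSolution (jMat m₁ m₂) V u)
    (hz : 0 < z.im) (hl : 0 ≤ l) (hφ : φ ∈ weylDisc u l z) (ξ : Fin m₁ → ℂ) :
    ∫ x in (0 : ℝ)..l, ‖toLp 2 (u x z *ᵥ Sum.elim ξ (φ *ᵥ ξ))‖ ^ 2 ≤
      ‖toLp 2 ξ‖ ^ 2 / (2 * z.im) := by
  have energy := hu.energy_identity z (Sum.elim ξ (φ *ᵥ ξ)) le_rfl hl
  rw [hu.initial, one_mulVec, hermForm_jMat_sumElim] at energy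
  rw [le_div_iff₀' (by positivity)]
  linarith [hφ ξ, sq_nonneg ‖toLp 2 (φ *ᵥ ξ)‖]

lemma mul_norm_sub_mulVec_sq_le (hu : IsDiracFundamentalSolution (jMat m₁ m₂) V u)
    (hz : 0 < z.im) (hl : 0 ≤ l) (hφ : φ ∈ weylDisc u l z) (hψ : ψ ∈ weylDisc u l z)
    (ξ : Fin m₁ → ℂ) : l * ‖toLp 2 ((φ - ψ) *ᵥ ξ)‖ ^ 2 ≤ 2 / z.im * ‖toLp 2 ξ‖ ^ 2 := by
  have integrable := fun χ : Matrix (Fin m₂) (Fin m₁) ℂ =>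
    hu.intervalIntegrable_norm_mulVec_sq z (Sum.elim ξ (χ *ᵥ ξ)) le_rfl hl
  calc l * ‖toLp 2 ((φ - ψ) *ᵥ ξ)‖ ^ 2
      = ∫ _ in (0 : ℝ)..l, ‖toLp 2 ((φ - ψ) *ᵥ ξ)‖ ^ 2 := by simp
    _ ≤ ∫ x in (0 : ℝ)..l, 2 * (‖toLp 2 (u x z *ᵥ Sum.elim ξ (φ *ᵥ ξ))‖ ^ 2 +
          ‖toLp 2 (u x z *ᵥ Sum.elim ξ (ψ *ᵥ ξ))‖ ^ 2) :=
        intervalIntegral.integral_mono_on hl intervalIntegrable_const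
          (((integrable φ).add (integrable ψ)).const_mul 2)
          fun x hx => hu.norm_sub_mulVec_sq_le hz.le hx.1 φ ψ ξ
    _ ≤ 2 * (‖toLp 2 ξ‖ ^ 2 / (2 * z.im) + ‖toLp 2 ξ‖ ^ 2 / (2 * z.im)) := by
        rw [intervalIntegral.integral_const_mul,
          intervalIntegral.integral_add (integrable φ) (integrable ψ)]
        gcongr
        exacts [hu.integral_norm_mulVec_sq_le hz hl hφ ξ, hu.integral_norm_mulVec_sq_le hz hl hψ ξ]
    _ = 2 / z.im * ‖toLp 2 ξ‖ ^ 2 := by field_simp; ring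

lemma dist_le_of_mem_weylDisc (hu : IsDiracFundamentalSolution (jMat m₁ m₂) V u)
    (hz : 0 < z.im) (hl : 0 < l) (hφ : φ ∈ weylDisc u l z) (hψ : ψ ∈ weylDisc u l z) :
    dist φ ψ ≤ √(2 / z.im) * √l⁻¹ := by
  rw [dist_eq_norm]
  refine l2_opNorm_le_of_forall_norm_mulVec_le (by positivity) fun ξ => ?_
  refine le_of_sq_le_sq ?_ (by positivity)
  rw [mul_pow, mul_pow, Real.sq_sqrt (by positivity), Real.sq_sqrt (by positivity), mul_right_comm,
    ← div_eq_mul_inv, le_div_iff₀' hl]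
  exact hu.mul_norm_sub_mulVec_sq_le hz hl.le hφ hψ ξ

lemma exists_differentiableOn_forall_mem_weylDisc
    (hu : IsDiracFundamentalSolution (jMat m₁ m₂) V u) :
    ∃ φ : ℂ → Matrix (Fin m₂) (Fin m₁) ℂ, DifferentiableOn ℂ φ {z | 0 < z.im} ∧
      ∀ z : ℂ, 0 < z.im → ∀ x, 0 ≤ x → φ z ∈ weylDisc u x z := by
  have approx_mem : ∀ z : ℂ, 0 < z.im → ∀ (x : ℝ) (n : ℕ), 0 ≤ x → x ≤ n + 1 →
      weylApprox u (n + 1) z ∈ weylDisc u x z := fun z hz x n hx hxn =>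
    hu.weylDisc_antitoneOn hz.le hx (hx.trans hxn) hxn
      (hu.weylApprox_mem_weylDisc hz.le (hx.trans hxn))
  have radius_tendsto : Tendsto (fun n : ℕ => √((n : ℝ) + 1)⁻¹) atTop (𝓝 0) := by
    simpa using (tendsto_one_div_add_atTop_nhds_zero_nat (𝕜 := ℝ)).sqrt
  have factor_continuousOn : ContinuousOn (fun z : ℂ => √(2 / z.im)) {z | 0 < z.im} :=
    (continuousOn_const.div Complex.continuous_im.continuousOn fun _ hz => ne_of_gt hz).sqrt
  obtain ⟨φ, φ_differentiable, φ_limit⟩ := exists_differentiableOn_tendsto_of_dist_le_mul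
    (F := fun n : ℕ => weylApprox u (n + 1)) (isOpen_lt continuous_const Complex.continuous_im)
    (fun n => hu.differentiableOn_weylApprox (by positivity)) factor_continuousOn radius_tendsto
    fun z hz n m hnm => hu.dist_le_of_mem_weylDisc hz (by positivity)
      (approx_mem z hz _ n (by positivity) le_rfl)
      (approx_mem z hz _ m (by positivity) (by gcongr))
  refine ⟨φ, φ_differentiable, fun z hz x hx => ?_⟩
  refine isClosed_weylDisc.mem_of_tendsto (φ_limit z hz) ?_
  filter_upwards [eventually_ge_atTop ⌈x⌉₊] with n hn
  exact approx_mem z hz x n hx ((Nat.ceil_le.1 hn).trans (by simp))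

lemma integrableOn_norm_mulVec_sq (hu : IsDiracFundamentalSolution (jMat m₁ m₂) V u)
    (hz : 0 < z.im) (hφ : ∀ x, 0 ≤ x → φ ∈ weylDisc u x z) (ξ : Fin m₁ → ℂ) :
    IntegrableOn (fun x => ‖toLp 2 (u x z *ᵥ Sum.elim ξ (φ *ᵥ ξ))‖ ^ 2) (Ici 0) := by
  rw [integrableOn_Ici_iff_integrableOn_Ioi]
  refine integrableOn_Ioi_of_intervalIntegral_norm_bounded (b := id) (l := atTop)
    (‖toLp 2 ξ‖ ^ 2 / (2 * z.im)) 0 (fun l => ?_) tendsto_id ?_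
  · exact ((hu.continuousOn_norm_mulVec_sq z _).mono Icc_subset_Ici_self).integrableOn_Icc.mono_set
      Ioc_subset_Icc_self
  · filter_upwards [eventually_ge_atTop 0] with l hl
    simpa using hu.integral_norm_mulVec_sq_le hz hl (hφ l hl) ξ

lemma eq_of_integrableOn (hu : IsDiracFundamentalSolution (jMat m₁ m₂) V u) (hz : 0 ≤ z.im)
    (hφ : ∀ ξ, IntegrableOn (fun x => ‖toLp 2 (u x z *ᵥ Sum.elim ξ (φ *ᵥ ξ))‖ ^ 2) (Ici 0))
    (hψ : ∀ ξ, IntegrableOn (fun x => ‖toLp 2 (u x z *ᵥ Sum.elim ξ (ψ *ᵥ ξ))‖ ^ 2) (Ici 0)) :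
    φ = ψ := by
  refine sub_eq_zero.1 (ext_of_mulVec_single fun k => ?_)
  set ξ : Fin m₁ → ℂ := Pi.single k 1
  have const_integrable :
      IntegrableOn (fun _ : ℝ => ‖toLp 2 ((φ - ψ) *ᵥ ξ)‖ ^ 2) (Ici 0) := by
    refine Integrable.mono' (((hφ ξ).add (hψ ξ)).const_mul 2) aestronglyMeasurable_const ?_
    refine (ae_restrict_mem measurableSet_Ici).mono fun x hx => ?_
    rw [Real.norm_of_nonneg (sq_nonneg _)]
    exact hu.norm_sub_mulVec_sq_le hz hx φ ψ ξ
  simpa [integrableOn_const_iff] using const_integrable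

end IsDiracFundamentalSolution

end WeylDiscs

theorem weyl_function_exists_unique_general {m₁ m₂ : ℕ}
    {V : ℝ → Matrix (Fin m₁ ⊕ Fin m₂) (Fin m₁ ⊕ Fin m₂) ℂ}
    (hV : ∀ x ∈ Ici (0 : ℝ), (V x).IsHermitian)
    {u : ℝ → ℂ → Matrix (Fin m₁ ⊕ Fin m₂) (Fin m₁ ⊕ Fin m₂) ℂ} (hu0 : ∀ z : ℂ, u 0 z = 1)
    (hux : ∀ z : ℂ, ∀ x ∈ Ici (0 : ℝ), ∀ i k,
      HasDerivWithinAt (fun y => u y z i k)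
        (((Complex.I • (z • jMat m₁ m₂ + jMat m₁ m₂ * V x)) * u x z) i k) (Ici (0 : ℝ)) x) :
    ∃ φ : ℂ → Matrix (Fin m₂) (Fin m₁) ℂ, IsWeylFunction u φ ∧
      ∀ ψ : ℂ → Matrix (Fin m₂) (Fin m₁) ℂ, IsWeylFunction u ψ →
        ∀ z : ℂ, 0 < z.im → ψ z = φ z := by
  have hu : IsDiracFundamentalSolution (jMat m₁ m₂) V u :=
    ⟨jMat_mul_self m₁ m₂, isHermitian_jMat m₁ m₂, hV, hu0,
      fun z x hx => hasDerivWithinAt_matrix_iff.2 (hux z x hx)⟩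
  obtain ⟨φ, φ_differentiable, φ_mem⟩ := hu.exists_differentiableOn_forall_mem_weylDisc
  have φ_integrable := fun z hz => hu.integrableOn_norm_mulVec_sq hz (φ_mem z hz)
  refine ⟨φ, isWeylFunction_iff.2 ⟨φ_differentiable, φ_integrable⟩, fun ψ hψ z hz => ?_⟩
  exact hu.eq_of_integrableOn hz.le ((isWeylFunction_iff.1 hψ).2 z hz) (φ_integrable z hz)

/-- A Dirac system `y_x = i(zj + jV)y` on `[0,∞)` with locally integrable
potential `v` has exactly one Weyl function (unique as a function on `ℂ₊`). -/
theorem weyl_function_exists_unique {m₁ m₂ : ℕ}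
    (v : ℝ → Matrix (Fin m₁) (Fin m₂) ℂ)
    (hv : ∀ i j, LocallyIntegrableOn (fun x => v x i j) (Ici 0))
    (u : ℝ → ℂ → Matrix (Fin m₁ ⊕ Fin m₂) (Fin m₁ ⊕ Fin m₂) ℂ)
    (hu0 : ∀ z : ℂ, u 0 z = 1)
    (hux : ∀ z : ℂ, ∀ x ∈ Ici (0:ℝ), ∀ i k,
      HasDerivWithinAt (fun y => u y z i k)
        (((Complex.I • (z • jMat m₁ m₂ + jMat m₁ m₂ * VMat v x)) * u x z) i k) (Ici (0:ℝ)) x) :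
    ∃ φ : ℂ → Matrix (Fin m₂) (Fin m₁) ℂ, IsWeylFunction u φ ∧
      ∀ ψ : ℂ → Matrix (Fin m₂) (Fin m₁) ℂ, IsWeylFunction u ψ →
        ∀ z : ℂ, 0 < z.im → ψ z = φ z :=
  weyl_function_exists_unique_general (fun x _ => isHermitian_VMat v x) hu0 hux
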